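/- arXiv:1506.03430 — 2 statements merged into one kernel-verified Lean document; each statement's English description precedes it below -/
import Mathlib

section
/- There exists a universal constant C > 0 such that for all integers n1, n2 > 1 and every 0 < δ ≤ 1, the entropy integral of the Frobenius-norm unit ball of isotonic matrices satisfies ∫_δ^1 sqrt( log N(ε, B(0,1)) ) dε ≤ (sqrt(C)/2) · (log n1)(log n2) · ( log( 4 sqrt(log n1 · log n2) / δ ) )². -/
open MeasureTheory ProbabilityTheory

noncomputable section

/-- The set of isotonic (coordinatewise nondecreasing) `n1 × n2` matrices. -/
def Isotonic {n1 n2 : ℕ} (θ : Fin n1 → Fin n2 → ℝ) : Prop :=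
  ∀ ⦃i k : Fin n1⦄ ⦃j l : Fin n2⦄, i ≤ k → j ≤ l → θ i j ≤ θ k l

/-- Squared Frobenius norm of a matrix. -/
def frobSq {n1 n2 : ℕ} (θ : Fin n1 → Fin n2 → ℝ) : ℝ :=
  ∑ i, ∑ j, θ i j ^ 2

/-- The `ε`-covering number of `F ⊆ ℝ^{n1×n2}` in the Frobenius metric: the smallest
cardinality of a finite set `S` such that every point of `F` is within Frobenius
distance `ε` of some point of `S`. -/
def coverNum {n1 n2 : ℕ} (ε : ℝ) (F : Set (Fin n1 → Fin n2 → ℝ)) : ℕ :=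
  sInf {k | ∃ S : Finset (Fin n1 → Fin n2 → ℝ), S.card = k ∧
    ∀ θ ∈ F, ∃ s ∈ S, frobSq (θ - s) ≤ ε ^ 2}

/-!
Splitting a matrix `θ` of the ball into its positive and negative parts reduces the problem to
nonnegative functions that are nonincreasing in both variables. On a dyadic block of rows and
columns such a function varies by at most its value at the block's corner, so rounding the indices
to `2 ^ J` values per block costs `O(2 ^ (-J))` in squared norm. The rounded function lies in
`O(J * √(log n1 * log n2))` times the symmetric convex hull of the normalized rectangle indicators:
against a functional bounded by `1` on these indicators, the `2 * J` alternating row and column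
refinements telescope, each costs one corner value times the square root of the block area, and
Cauchy–Schwarz sums the blocks. There are only polynomially many rectangles, so with `J` of order
`1 + log (1 / ε)` Maurey's sampling argument gives an `ε`-net whose log-cardinality is
`O((log n1 * log n2 * (1 + log (1 / ε)) / ε) ^ 2)`, and `log (c / ε) / ε` is the derivative of
`-log (c / ε) ^ 2 / 2`.
-/

section Development

open Finset

/-- A nonnegative function of two ordered variables that is nonincreasing in both: the class to
which an isotonic matrix is reduced by splitting it into its positive and negative parts. -/
structure NonnegAntitone {α β : Type*} [Preorder α] [Preorder β] (f : α → β → ℝ) : Prop where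
  nonneg : ∀ i j, 0 ≤ f i j
  anti : ∀ ⦃i k j l⦄, i ≤ k → j ≤ l → f k l ≤ f i j

namespace NonnegAntitone

theorem swap {α β : Type*} [Preorder α] [Preorder β] {f : α → β → ℝ} (hf : NonnegAntitone f) :
    NonnegAntitone fun j i => f i j :=
  ⟨fun j i => hf.nonneg i j, fun _ _ _ _ hj hi => hf.anti hi hj⟩

theorem translate {F : ℕ → ℕ → ℝ} (hF : NonnegAntitone F) (a b : ℕ) :
    NonnegAntitone fun i j => F (a + i) (b + j) :=
  ⟨fun _ _ => hF.nonneg _ _,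
    fun _ _ _ _ hi hj => hF.anti (Nat.add_le_add_left hi a) (Nat.add_le_add_left hj b)⟩

theorem antitone_left {α β : Type*} [Preorder α] [Preorder β] {f : α → β → ℝ}
    (hf : NonnegAntitone f) (j : β) : Antitone fun i => f i j :=
  fun _ _ h => hf.anti h le_rfl

theorem antitone_right {α β : Type*} [Preorder α] [Preorder β] {f : α → β → ℝ}
    (hf : NonnegAntitone f) (i : α) : Antitone (f i) :=
  fun _ _ h => hf.anti le_rfl h

end NonnegAntitone

/-- Every rectangle sum of `w` inside the window `[0, M) × [0, N)` is at most `B` times the square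
root of the area, that is, `w` pairs to at most `B` with every `L²`-normalized rectangle indicator.
Rectangles are given by a corner `(a, b)` and side lengths `m`, `n`. -/
def RectBound (M N : ℕ) (w : ℕ → ℕ → ℝ) (B : ℝ) : Prop :=
  ∀ ⦃a b m n : ℕ⦄, a + m ≤ M → b + n ≤ N →
    |∑ i ∈ range m, ∑ j ∈ range n, w (a + i) (b + j)| ≤ B * √(m * n)

namespace RectBound

variable {M N : ℕ} {w : ℕ → ℕ → ℝ} {B : ℝ}

theorem swap (hw : RectBound M N w B) : RectBound N M (fun j i => w i j) B := by
  intro b a n m hb ha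
  rw [sum_comm, mul_comm (n : ℝ)]
  exact hw ha hb

theorem translate (hw : RectBound M N w B) {a b m n : ℕ} (ha : a + m ≤ M) (hb : b + n ≤ N) :
    RectBound m n (fun i j => w (a + i) (b + j)) B := by
  intro a' b' m' n' ha' hb'
  simp only [← add_assoc]
  exact hw (by lia) (by lia)

theorem abs_sum_le (hw : RectBound M N w B) :
    |∑ i ∈ range M, ∑ j ∈ range N, w i j| ≤ B * √(M * N) := by
  simpa only [zero_add] using hw (zero_add M).le (zero_add N).le

end RectBound

/-- Rounding down to a multiple of `D`. -/
def roundDown (D i : ℕ) : ℕ := i / D * D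

theorem roundDown_le (D i : ℕ) : roundDown D i ≤ i := Nat.div_mul_le_self i D

theorem roundDown_one (i : ℕ) : roundDown 1 i = i := by simp [roundDown]

theorem roundDown_eq_zero {D i : ℕ} (h : i < D) : roundDown D i = 0 := by
  simp [roundDown, Nat.div_eq_of_lt h]

theorem roundDown_mul_add {D r : ℕ} (p : ℕ) (hr : r < D) : roundDown D (p * D + r) = p * D := by
  rw [roundDown, mul_comm p, Nat.mul_add_div (by lia), Nat.div_eq_of_lt hr, add_zero, mul_comm]

theorem roundDown_two_mul_mul_add {D r : ℕ} (p : ℕ) (hr : r < D) :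
    roundDown (2 * D) (p * D + r) = p / 2 * 2 * D := by
  rw [roundDown, mul_comm 2 D, ← Nat.div_div_eq_div_mul, mul_comm p, Nat.mul_add_div (by lia),
    Nat.div_eq_of_lt hr, add_zero, mul_comm D 2, mul_assoc]

theorem sum_range_mul {R : Type*} [AddCommMonoid R] (φ : ℕ → R) (P D : ℕ) :
    ∑ i ∈ range (P * D), φ i = ∑ p ∈ range P, ∑ r ∈ range D, φ (p * D + r) := by
  induction P with
  | zero => simp
  | succ P ih => rw [Nat.succ_mul, sum_range_add, ih, sum_range_succ]

theorem sum_range_mul_range_mul {R : Type*} [AddCommMonoid R] (φ : ℕ → ℕ → R) (P D Q E : ℕ) :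
    ∑ i ∈ range (P * D), ∑ j ∈ range (Q * E), φ i j =
      ∑ p ∈ range P, ∑ q ∈ range Q, ∑ i ∈ range D, ∑ j ∈ range E, φ (p * D + i) (q * E + j) := by
  simp only [sum_range_mul _ P, sum_range_mul _ Q]
  exact sum_congr rfl fun p _ => sum_comm

theorem sum_roundDown_two_sub_le {G : ℕ → ℝ} (hG : Antitone G) (h0 : ∀ i, 0 ≤ G i) (P : ℕ) :
    ∑ p ∈ range (P * 2), (G (p / 2 * 2) - G p) ≤ G 0 := by
  have hpair : ∀ q ∈ range P, ∑ r ∈ range 2, (G ((q * 2 + r) / 2 * 2) - G (q * 2 + r)) ≤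
      G (q * 2) - G ((q + 1) * 2) := by
    intro q _
    have h1 : (q * 2 + 1) / 2 * 2 = q * 2 := by lia
    have h2 : G ((q + 1) * 2) ≤ G (q * 2 + 1) := hG (by lia)
    simp only [sum_range_succ, sum_range_zero, add_zero, Nat.mul_div_cancel q two_pos, h1]
    linarith
  calc ∑ p ∈ range (P * 2), (G (p / 2 * 2) - G p)
      ≤ ∑ q ∈ range P, (G (q * 2) - G ((q + 1) * 2)) := by
        rw [sum_range_mul]
        exact sum_le_sum hpair
    _ = G 0 - G (P * 2) := by rw [sum_range_sub' fun q => G (q * 2), zero_mul]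
    _ ≤ G 0 := sub_le_self _ (h0 _)

-- Each cell column telescopes over the pairs of cell rows, so it contributes one cell norm
-- `√(D * E)` times `F 0 0`.
theorem sum_mul_roundDown_sub_le {F w : ℕ → ℕ → ℝ} {B : ℝ} {P Q D E : ℕ} (hB : 0 ≤ B)
    (hw : RectBound (P * 2 * D) (Q * E) w B) (hF : NonnegAntitone F) :
    ∑ i ∈ range (P * 2 * D), ∑ j ∈ range (Q * E),
        w i j * (F (roundDown D i) (roundDown E j) - F (roundDown (2 * D) i) (roundDown E j)) ≤
      Q * (B * √(D * E) * F 0 0) := by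
  let c : ℕ → ℕ → ℝ := fun p q => F (p / 2 * 2 * D) (q * E) - F (p * D) (q * E)
  have hc (p q : ℕ) : 0 ≤ c p q :=
    sub_nonneg.2 <| hF.anti (Nat.mul_le_mul_right D (Nat.div_mul_le_self p 2)) le_rfl
  have hcol (q : ℕ) : ∑ p ∈ range (P * 2), c p q ≤ F 0 0 := by
    have hG : Antitone fun p => F (p * D) (q * E) := fun _ _ h =>
      hF.anti (Nat.mul_le_mul_right D h) le_rfl
    exact (sum_roundDown_two_sub_le hG (fun _ => hF.nonneg _ _) P).trans
      (hF.anti (Nat.zero_le _) (Nat.zero_le _))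
  have hcell : ∀ p ∈ range (P * 2), ∀ q ∈ range Q,
      ∑ i ∈ range D, ∑ j ∈ range E, w (p * D + i) (q * E + j) *
          (F (roundDown D (p * D + i)) (roundDown E (q * E + j)) -
            F (roundDown (2 * D) (p * D + i)) (roundDown E (q * E + j))) ≤
        B * √(D * E) * c p q := by
    intro p hp q hq
    calc _ = (-∑ i ∈ range D, ∑ j ∈ range E, w (p * D + i) (q * E + j)) * c p q := by
          simp only [neg_mul, sum_mul, ← sum_neg_distrib]
          refine sum_congr rfl fun i hi => sum_congr rfl fun j hj => ?_
          rw [roundDown_mul_add p (mem_range.1 hi), roundDown_mul_add q (mem_range.1 hj),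
            roundDown_two_mul_mul_add p (mem_range.1 hi)]
          ring
      _ ≤ B * √(D * E) * c p q := by
          refine mul_le_mul_of_nonneg_right ((neg_le_abs _).trans (hw ?_ ?_)) (hc p q)
          · rw [← Nat.succ_mul]
            exact Nat.mul_le_mul_right D (mem_range.1 hp)
          · rw [← Nat.succ_mul]
            exact Nat.mul_le_mul_right E (mem_range.1 hq)
  rw [sum_range_mul_range_mul]
  calc _ ≤ ∑ p ∈ range (P * 2), ∑ q ∈ range Q, B * √(D * E) * c p q :=
        sum_le_sum fun p hp => sum_le_sum fun q hq => hcell p hp q hq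
    _ = ∑ q ∈ range Q, B * √(D * E) * ∑ p ∈ range (P * 2), c p q := by
        rw [sum_comm]
        simp only [mul_sum]
    _ ≤ ∑ _q ∈ range Q, B * √(D * E) * F 0 0 := by
        gcongr
        exact hcol _
    _ = Q * (B * √(D * E) * F 0 0) := by rw [sum_const, card_range, nsmul_eq_mul]

theorem sum_mul_row_refinement_le {F w : ℕ → ℕ → ℝ} {B : ℝ} {u v s t : ℕ} (hB : 0 ≤ B)
    (hw : RectBound (2 ^ u) (2 ^ v) w B) (hF : NonnegAntitone F) (hts : t ≤ s + 1) :
    ∑ i ∈ range (2 ^ u), ∑ j ∈ range (2 ^ v),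
        w i j * (F (roundDown (2 ^ (u - (s + 1))) i) (roundDown (2 ^ (v - t)) j) -
          F (roundDown (2 ^ (u - s)) i) (roundDown (2 ^ (v - t)) j)) ≤
      B * √(2 ^ u * 2 ^ v) * F 0 0 := by
  have hF0 := hF.nonneg 0 0
  rcases le_or_gt u s with hu | hu
  · rw [Nat.sub_eq_zero_of_le hu, Nat.sub_eq_zero_of_le (hu.trans s.le_succ)]
    simp only [sub_self, mul_zero, sum_const_zero]
    positivity
  · have hrows : 2 ^ u = 2 ^ s * 2 * 2 ^ (u - (s + 1)) := by
      rw [← pow_succ, ← pow_add, Nat.add_sub_cancel' hu]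
    have hcols : 2 ^ v = 2 ^ (v - (v - t)) * 2 ^ (v - t) := by
      rw [← pow_add, Nat.sub_add_cancel (Nat.sub_le v t)]
    have hcells : (2 : ℝ) ^ (v - (v - t)) * √(2 ^ (u - (s + 1)) * 2 ^ (v - t)) ≤
        √(2 ^ u * 2 ^ v) := by
      refine Real.le_sqrt_of_sq_le ?_
      rw [mul_pow, Real.sq_sqrt (by positivity), ← pow_mul, ← pow_add, ← pow_add, ← pow_add]
      exact pow_le_pow_right₀ one_le_two (by lia)
    rw [hrows, hcols] at hw
    have hstep := sum_mul_roundDown_sub_le hB hw hF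
    rw [← hrows, ← hcols, ← pow_succ', show u - (s + 1) + 1 = u - s by lia] at hstep
    refine hstep.trans ?_
    push_cast
    calc (2 : ℝ) ^ (v - (v - t)) * (B * √(2 ^ (u - (s + 1)) * 2 ^ (v - t)) * F 0 0)
        = B * (2 ^ (v - (v - t)) * √(2 ^ (u - (s + 1)) * 2 ^ (v - t))) * F 0 0 := by ring
      _ ≤ B * √(2 ^ u * 2 ^ v) * F 0 0 := by gcongr

-- Refine rows and columns alternately, one dyadic level at a time, so that cells stay
-- nearly square relative to the block: each of the `2 * J` refinements then costs the same.
theorem sum_mul_block_rounding_le {F w : ℕ → ℕ → ℝ} {B : ℝ} {u v : ℕ} (hB : 0 ≤ B)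
    (hw : RectBound (2 ^ u) (2 ^ v) w B) (hF : NonnegAntitone F) (J : ℕ) :
    ∑ i ∈ range (2 ^ u), ∑ j ∈ range (2 ^ v),
        w i j * F (roundDown (2 ^ (u - J)) i) (roundDown (2 ^ (v - J)) j) ≤
      (1 + 2 * J) * (B * √(2 ^ u * 2 ^ v) * F 0 0) := by
  induction J with
  | zero =>
    have hconst : ∑ i ∈ range (2 ^ u), ∑ j ∈ range (2 ^ v),
        w i j * F (roundDown (2 ^ (u - 0)) i) (roundDown (2 ^ (v - 0)) j) =
          (∑ i ∈ range (2 ^ u), ∑ j ∈ range (2 ^ v), w i j) * F 0 0 := by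
      simp only [sum_mul, Nat.sub_zero]
      refine sum_congr rfl fun i hi => sum_congr rfl fun j hj => ?_
      rw [roundDown_eq_zero (mem_range.1 hi), roundDown_eq_zero (mem_range.1 hj)]
    have hsum := (le_abs_self _).trans hw.abs_sum_le
    push_cast at hsum
    rw [hconst, Nat.cast_zero, mul_zero, add_zero, one_mul]
    exact mul_le_mul_of_nonneg_right hsum (hF.nonneg 0 0)
  | succ J ih =>
    have hrow := sum_mul_row_refinement_le hB hw hF J.le_succ
    have hcol := sum_mul_row_refinement_le hB hw.swap hF.swap (le_refl (J + 1))
    rw [sum_comm, mul_comm (2 ^ v : ℝ)] at hcol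
    simp only [mul_sub, sum_sub_distrib] at hrow hcol
    push_cast
    linarith

theorem sum_roundDown_sub_le {φ : ℕ → ℝ} (hφ : Antitone φ) (h0 : ∀ i, 0 ≤ φ i) (P D : ℕ) :
    ∑ i ∈ range (P * D), (φ (roundDown D i) - φ i) ≤ D * φ 0 := by
  rw [sum_range_mul]
  calc _ ≤ ∑ p ∈ range P, ∑ _r ∈ range D, (φ (p * D) - φ ((p + 1) * D)) := by
        refine sum_le_sum fun p _ => sum_le_sum fun r hr => ?_
        rw [roundDown_mul_add p (mem_range.1 hr)]
        refine sub_le_sub_left (hφ ?_) _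
        rw [Nat.succ_mul]
        exact Nat.add_le_add_left (mem_range.1 hr).le _
    _ = D * (φ 0 - φ (P * D)) := by
        simp only [sum_const, card_range, nsmul_eq_mul]
        rw [← mul_sum, sum_range_sub' fun p => φ (p * D), zero_mul]
    _ ≤ D * φ 0 := by
        gcongr
        exact sub_le_self _ (h0 _)

theorem sum_dyadic_roundDown_sub_le {φ : ℕ → ℝ} (hφ : Antitone φ) (h0 : ∀ i, 0 ≤ φ i) (u J : ℕ) :
    ∑ i ∈ range (2 ^ u), (φ (roundDown (2 ^ (u - J)) i) - φ i) ≤ 2 ^ u / 2 ^ J * φ 0 := by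
  rcases le_total u J with hu | hu
  · rw [Nat.sub_eq_zero_of_le hu]
    simp only [pow_zero, roundDown_one, sub_self, sum_const_zero]
    exact mul_nonneg (by positivity) (h0 0)
  · have hsum := sum_roundDown_sub_le hφ h0 (2 ^ J) (2 ^ (u - J))
    rw [← pow_add, Nat.add_sub_cancel' hu] at hsum
    push_cast at hsum
    rwa [pow_sub₀ _ two_ne_zero hu, ← div_eq_mul_inv] at hsum

theorem sum_block_rounding_error_sq_le {F : ℕ → ℕ → ℝ} (hF : NonnegAntitone F) (u v J : ℕ) :
    ∑ i ∈ range (2 ^ u), ∑ j ∈ range (2 ^ v),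
        (F i j - F (roundDown (2 ^ (u - J)) i) (roundDown (2 ^ (v - J)) j)) ^ 2 ≤
      2 / 2 ^ J * (2 ^ u * (2 ^ v * F 0 0 ^ 2)) := by
  set ρ := roundDown (2 ^ (u - J))
  set σ := roundDown (2 ^ (v - J))
  have hsq (i j : ℕ) : (F i j - F (ρ i) (σ j)) ^ 2 ≤
      F 0 0 * ((F (ρ i) (σ j) - F (ρ i) j) + (F (ρ i) j - F i j)) := by
    have hmax : F (ρ i) (σ j) ≤ F 0 0 := hF.anti (Nat.zero_le _) (Nat.zero_le _)
    have hle : F i j ≤ F (ρ i) (σ j) := hF.anti (roundDown_le _ _) (roundDown_le _ _)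
    nlinarith [hF.nonneg i j]
  have hcols (i : ℕ) : ∑ j ∈ range (2 ^ v), (F (ρ i) (σ j) - F (ρ i) j) ≤
      2 ^ v / 2 ^ J * F 0 0 := by
    refine (sum_dyadic_roundDown_sub_le (hF.antitone_right _) (hF.nonneg _) v J).trans ?_
    gcongr
    exact hF.anti (Nat.zero_le _) le_rfl
  have hrows (j : ℕ) : ∑ i ∈ range (2 ^ u), (F (ρ i) j - F i j) ≤ 2 ^ u / 2 ^ J * F 0 0 := by
    refine (sum_dyadic_roundDown_sub_le (hF.antitone_left j) (fun _ => hF.nonneg _ _) u J).trans ?_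
    gcongr
    exact hF.anti le_rfl (Nat.zero_le _)
  have hF0 := hF.nonneg 0 0
  calc _ ≤ ∑ i ∈ range (2 ^ u), ∑ j ∈ range (2 ^ v),
        F 0 0 * ((F (ρ i) (σ j) - F (ρ i) j) + (F (ρ i) j - F i j)) :=
        sum_le_sum fun i _ => sum_le_sum fun j _ => hsq i j
    _ = F 0 0 * (∑ i ∈ range (2 ^ u), ∑ j ∈ range (2 ^ v), (F (ρ i) (σ j) - F (ρ i) j) +
        ∑ j ∈ range (2 ^ v), ∑ i ∈ range (2 ^ u), (F (ρ i) j - F i j)) := by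
        rw [sum_comm (s := range (2 ^ v))]
        simp only [← sum_add_distrib, mul_sum]
    _ ≤ F 0 0 * (∑ _i ∈ range (2 ^ u), 2 ^ v / 2 ^ J * F 0 0 +
        ∑ _j ∈ range (2 ^ v), 2 ^ u / 2 ^ J * F 0 0) := by
        gcongr
        exacts [hcols _, hrows _]
    _ = 2 / 2 ^ J * (2 ^ u * (2 ^ v * F 0 0 ^ 2)) := by
        simp only [sum_const, card_range, nsmul_eq_mul]
        push_cast
        ring

theorem sum_range_two_pow_sub_one {R : Type*} [AddCommMonoid R] (φ : ℕ → R) (U : ℕ) :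
    ∑ i ∈ range (2 ^ U - 1), φ i = ∑ u ∈ range U, ∑ r ∈ range (2 ^ u), φ (2 ^ u - 1 + r) := by
  induction U with
  | zero => simp
  | succ U ih =>
    have hU := Nat.one_le_two_pow (n := U)
    rw [show 2 ^ (U + 1) - 1 = 2 ^ U - 1 + 2 ^ U by rw [pow_succ]; lia, sum_range_add, ih,
      sum_range_succ]

theorem sum_range_two_pow_sub_one₂ {R : Type*} [AddCommMonoid R] (φ : ℕ → ℕ → R) (U V : ℕ) :
    ∑ i ∈ range (2 ^ U - 1), ∑ j ∈ range (2 ^ V - 1), φ i j =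
      ∑ u ∈ range U, ∑ v ∈ range V, ∑ r ∈ range (2 ^ u), ∑ s ∈ range (2 ^ v),
        φ (2 ^ u - 1 + r) (2 ^ v - 1 + s) := by
  simp only [sum_range_two_pow_sub_one]
  exact sum_congr rfl fun u _ => sum_comm

theorem sum_two_pow_mul_le {φ : ℕ → ℝ} (hφ : Antitone φ) (h0 : ∀ i, 0 ≤ φ i) (U : ℕ) :
    ∑ u ∈ range U, 2 ^ u * φ (2 ^ u - 1) ≤ 2 * ∑ i ∈ range (2 ^ U - 1), φ i := by
  rcases U with _ | U
  · simp
  have hcond := sum_condensed_le (f := fun k => φ (k - 1))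
    (fun _ _ _ h => hφ (Nat.sub_le_sub_right h 1)) U
  have hsub : 2 ^ U ≤ 2 ^ (U + 1) - 1 := by
    have := Nat.one_le_two_pow (n := U)
    rw [pow_succ]; lia
  simp only [nsmul_eq_mul, Nat.cast_pow, Nat.cast_ofNat] at hcond
  calc ∑ u ∈ range (U + 1), 2 ^ u * φ (2 ^ u - 1)
      ≤ φ 0 + 2 * ∑ k ∈ Ico 2 (2 ^ U + 1), φ (k - 1) := hcond
    _ ≤ 2 * (φ 0 + ∑ k ∈ Ico 2 (2 ^ U + 1), φ (k - 1)) := by linarith [h0 0]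
    _ = 2 * ∑ i ∈ range (2 ^ U), φ i := by
        rw [sum_range_eq_add_Ico φ (by positivity), ← sum_Ico_add' _ 1 (2 ^ U) 1]
        simp only [Nat.add_sub_cancel]
    _ ≤ 2 * ∑ i ∈ range (2 ^ (U + 1) - 1), φ i := by
        gcongr
        exact fun i _ _ => h0 i

theorem sum_corner_sq_le {F : ℕ → ℕ → ℝ} (hF : NonnegAntitone F) (U V : ℕ) :
    ∑ u ∈ range U, ∑ v ∈ range V, 2 ^ u * (2 ^ v * F (2 ^ u - 1) (2 ^ v - 1) ^ 2) ≤
      4 * ∑ i ∈ range (2 ^ U - 1), ∑ j ∈ range (2 ^ V - 1), F i j ^ 2 := by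
  have hrow (i : ℕ) : ∑ v ∈ range V, 2 ^ v * F i (2 ^ v - 1) ^ 2 ≤
      2 * ∑ j ∈ range (2 ^ V - 1), F i j ^ 2 :=
    sum_two_pow_mul_le (φ := fun j => F i j ^ 2)
      (fun _ _ h => pow_le_pow_left₀ (hF.nonneg _ _) (hF.anti le_rfl h) 2)
      (fun _ => sq_nonneg _) V
  have hcol : ∑ u ∈ range U, 2 ^ u * ∑ j ∈ range (2 ^ V - 1), F (2 ^ u - 1) j ^ 2 ≤
      2 * ∑ i ∈ range (2 ^ U - 1), ∑ j ∈ range (2 ^ V - 1), F i j ^ 2 :=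
    sum_two_pow_mul_le (φ := fun i => ∑ j ∈ range (2 ^ V - 1), F i j ^ 2)
      (fun _ _ h => sum_le_sum fun j _ =>
        pow_le_pow_left₀ (hF.nonneg _ _) (hF.anti h le_rfl) 2)
      (fun _ => sum_nonneg fun _ _ => sq_nonneg _) U
  calc _ ≤ ∑ u ∈ range U, 2 ^ u * (2 * ∑ j ∈ range (2 ^ V - 1), F (2 ^ u - 1) j ^ 2) := by
        simp only [← mul_sum]
        gcongr
        exact hrow _
    _ ≤ _ := by
        simp only [mul_left_comm _ (2 : ℝ), ← mul_sum] at hcol ⊢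
        linarith

/-- Rounding of an index at resolution `J`: inside its dyadic block `[2 ^ u - 1, 2 ^ (u + 1) - 1)`,
the offset is rounded down to a multiple of `2 ^ (u - J)`, so that at most `2 ^ J` values per block
remain (the truncated subtraction leaves blocks shorter than `2 ^ J` untouched). -/
def blockRound (J i : ℕ) : ℕ :=
  2 ^ Nat.log 2 (i + 1) - 1 +
    roundDown (2 ^ (Nat.log 2 (i + 1) - J)) (i - (2 ^ Nat.log 2 (i + 1) - 1))

theorem blockRound_block_add (J : ℕ) {u r : ℕ} (hr : r < 2 ^ u) :
    blockRound J (2 ^ u - 1 + r) = 2 ^ u - 1 + roundDown (2 ^ (u - J)) r := by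
  have hu := Nat.one_le_two_pow (n := u)
  have hlog : Nat.log 2 (2 ^ u - 1 + r + 1) = u :=
    Nat.log_eq_of_pow_le_of_lt_pow (by lia) (by rw [pow_succ]; lia)
  rw [blockRound, hlog, Nat.add_sub_cancel_left]

theorem sum_blockRound_error_sq_le {F : ℕ → ℕ → ℝ} (hF : NonnegAntitone F) (U V J : ℕ) :
    ∑ i ∈ range (2 ^ U - 1), ∑ j ∈ range (2 ^ V - 1),
        (F i j - F (blockRound J i) (blockRound J j)) ^ 2 ≤
      8 / 2 ^ J * ∑ i ∈ range (2 ^ U - 1), ∑ j ∈ range (2 ^ V - 1), F i j ^ 2 := by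
  have hblock (u v : ℕ) : ∑ r ∈ range (2 ^ u), ∑ s ∈ range (2 ^ v),
      (F (2 ^ u - 1 + r) (2 ^ v - 1 + s) -
        F (blockRound J (2 ^ u - 1 + r)) (blockRound J (2 ^ v - 1 + s))) ^ 2 ≤
      2 / 2 ^ J * (2 ^ u * (2 ^ v * F (2 ^ u - 1) (2 ^ v - 1) ^ 2)) := by
    refine (sum_congr rfl fun r hr => sum_congr rfl fun s hs => ?_).trans_le
      (sum_block_rounding_error_sq_le (hF.translate (2 ^ u - 1) (2 ^ v - 1)) u v J)
    rw [blockRound_block_add J (mem_range.1 hr), blockRound_block_add J (mem_range.1 hs)]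
  rw [sum_range_two_pow_sub_one₂ (fun i j => (F i j - F (blockRound J i) (blockRound J j)) ^ 2)]
  calc _ ≤ ∑ u ∈ range U, ∑ v ∈ range V,
        2 / 2 ^ J * (2 ^ u * (2 ^ v * F (2 ^ u - 1) (2 ^ v - 1) ^ 2)) :=
        sum_le_sum fun u _ => sum_le_sum fun v _ => hblock u v
    _ ≤ 2 / 2 ^ J * (4 * ∑ i ∈ range (2 ^ U - 1), ∑ j ∈ range (2 ^ V - 1), F i j ^ 2) := by
        simp only [← mul_sum _ _ ((2 : ℝ) / 2 ^ J)]
        gcongr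
        exact sum_corner_sq_le hF U V
    _ = _ := by ring

theorem sum_sqrt_mul_corner_le {F : ℕ → ℕ → ℝ} (hF : NonnegAntitone F) (U V : ℕ) :
    ∑ u ∈ range U, ∑ v ∈ range V, √(2 ^ u * 2 ^ v) * F (2 ^ u - 1) (2 ^ v - 1) ≤
      2 * √(U * V * ∑ i ∈ range (2 ^ U - 1), ∑ j ∈ range (2 ^ V - 1), F i j ^ 2) := by
  have hsq (x : ℕ × ℕ) : (√(2 ^ x.1 * 2 ^ x.2) * F (2 ^ x.1 - 1) (2 ^ x.2 - 1)) ^ 2 =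
      2 ^ x.1 * (2 ^ x.2 * F (2 ^ x.1 - 1) (2 ^ x.2 - 1) ^ 2) := by
    rw [mul_pow, Real.sq_sqrt (by positivity), mul_assoc]
  refine le_of_sq_le_sq ?_ (by positivity)
  rw [mul_pow, Real.sq_sqrt (by positivity), ← sum_product']
  calc _ ≤ _ := sq_sum_le_card_mul_sum_sq
    _ = (U * V : ℝ) * ∑ u ∈ range U, ∑ v ∈ range V,
          2 ^ u * (2 ^ v * F (2 ^ u - 1) (2 ^ v - 1) ^ 2) := by
        simp only [hsq, sum_product, card_product, card_range, Nat.cast_mul]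
    _ ≤ (U * V : ℝ) * (4 * ∑ i ∈ range (2 ^ U - 1), ∑ j ∈ range (2 ^ V - 1), F i j ^ 2) := by
        gcongr
        exact sum_corner_sq_le hF U V
    _ = _ := by ring

theorem sum_mul_blockRound_le {F w : ℕ → ℕ → ℝ} {B : ℝ} {U V : ℕ} (hB : 0 ≤ B)
    (hw : RectBound (2 ^ U - 1) (2 ^ V - 1) w B) (hF : NonnegAntitone F) (J : ℕ) :
    ∑ i ∈ range (2 ^ U - 1), ∑ j ∈ range (2 ^ V - 1),
        w i j * F (blockRound J i) (blockRound J j) ≤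
      (1 + 2 * J) *
        (2 * √(U * V * ∑ i ∈ range (2 ^ U - 1), ∑ j ∈ range (2 ^ V - 1), F i j ^ 2)) * B := by
  have hfit {u U : ℕ} (h : u ∈ range U) : 2 ^ u - 1 + 2 ^ u ≤ 2 ^ U - 1 := by
    have := Nat.pow_le_pow_right two_pos (mem_range.1 h)
    rw [pow_succ] at this
    lia
  have hblock : ∀ u ∈ range U, ∀ v ∈ range V, ∑ r ∈ range (2 ^ u), ∑ s ∈ range (2 ^ v),
      w (2 ^ u - 1 + r) (2 ^ v - 1 + s) *
        F (blockRound J (2 ^ u - 1 + r)) (blockRound J (2 ^ v - 1 + s)) ≤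
      (1 + 2 * J) * B * (√(2 ^ u * 2 ^ v) * F (2 ^ u - 1) (2 ^ v - 1)) := by
    intro u hu v hv
    have h := sum_mul_block_rounding_le hB (hw.translate (hfit hu) (hfit hv))
      (hF.translate (2 ^ u - 1) (2 ^ v - 1)) J
    refine (sum_congr rfl fun r hr => sum_congr rfl fun s hs => ?_).trans_le
      (h.trans_eq (by simp only [add_zero]; ring))
    rw [blockRound_block_add J (mem_range.1 hr), blockRound_block_add J (mem_range.1 hs)]
  rw [sum_range_two_pow_sub_one₂ fun i j => w i j * F (blockRound J i) (blockRound J j)]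
  calc _ ≤ ∑ u ∈ range U, ∑ v ∈ range V,
        (1 + 2 * J) * B * (√(2 ^ u * 2 ^ v) * F (2 ^ u - 1) (2 ^ v - 1)) :=
        sum_le_sum fun u hu => sum_le_sum fun v hv => hblock u hu v hv
    _ = (1 + 2 * J) * B *
        ∑ u ∈ range U, ∑ v ∈ range V, √(2 ^ u * 2 ^ v) * F (2 ^ u - 1) (2 ^ v - 1) := by
        simp only [mul_sum]
    _ ≤ (1 + 2 * J) * B *
        (2 * √(U * V * ∑ i ∈ range (2 ^ U - 1), ∑ j ∈ range (2 ^ V - 1), F i j ^ 2)) := by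
        gcongr
        exact sum_sqrt_mul_corner_le hF U V
    _ = _ := by ring

/-- `x` lies in `R` times the symmetric convex hull of the `L²`-normalized rectangle indicators of
the window `[0, M) × [0, N)`, expressed by duality: every `w` pairing to at most `B` with all these
indicators pairs to at most `R * B` with `x`. -/
def InRectHull (M N : ℕ) (R : ℝ) (x : ℕ → ℕ → ℝ) : Prop :=
  ∀ ⦃w : ℕ → ℕ → ℝ⦄ ⦃B : ℝ⦄, 0 ≤ B → RectBound M N w B →
    ∑ i ∈ range M, ∑ j ∈ range N, w i j * x i j ≤ R * B

theorem inRectHull_blockRound {F : ℕ → ℕ → ℝ} (hF : NonnegAntitone F) {U V : ℕ} (J : ℕ)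
    (hmass : ∑ i ∈ range (2 ^ U - 1), ∑ j ∈ range (2 ^ V - 1), F i j ^ 2 ≤ 1) :
    InRectHull (2 ^ U - 1) (2 ^ V - 1) ((1 + 2 * J) * (2 * √(U * V)))
      fun i j => F (blockRound J i) (blockRound J j) := by
  intro w B hB hw
  refine (sum_mul_blockRound_le hB hw hF J).trans ?_
  have hUV := mul_le_of_le_one_right (by positivity : (0 : ℝ) ≤ U * V) hmass
  gcongr

section Maurey

variable {E ι : Type*} [NormedAddCommGroup E] [InnerProductSpace ℝ E]

-- Greedy choice: taking the atom that correlates best with `x` plus the accumulated error makes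
-- the cross term nonpositive, so each step adds at most `R ^ 2` to the squared error.
theorem exists_norm_sum_sub_sq_le {v : ι → E} {x : E} {R : ℝ} (hv : ∀ i, ‖v i‖ ≤ R)
    (hx : ∀ y, ∃ i, inner ℝ y x ≤ inner ℝ y (v i)) (k : ℕ) :
    ∃ t : Fin k → ι, ‖∑ l, (x - v (t l))‖ ^ 2 ≤ k * R ^ 2 := by
  induction k with
  | zero => exact ⟨Fin.elim0, by simp⟩
  | succ k ih =>
    obtain ⟨t, ht⟩ := ih
    set D := ∑ l, (x - v (t l))
    obtain ⟨i, hi⟩ := hx (D + x)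
    have hexpand : ‖(x - v i) + D‖ ^ 2 = ‖D‖ ^ 2 +
        2 * (inner ℝ (D + x) x - inner ℝ (D + x) (v i)) - ‖x‖ ^ 2 + ‖v i‖ ^ 2 := by
      rw [norm_add_sq_real, norm_sub_sq_real, inner_sub_left, inner_add_left, inner_add_left,
        real_inner_self_eq_norm_sq, real_inner_comm x D, real_inner_comm (v i) D]
      ring
    have hvi : ‖v i‖ ^ 2 ≤ R ^ 2 := pow_le_pow_left₀ (norm_nonneg _) (hv i) 2
    refine ⟨Fin.cons i t, ?_⟩
    simp only [Fin.sum_univ_succ, Fin.cons_zero, Fin.cons_succ]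
    push_cast
    linarith [sq_nonneg ‖x‖]

theorem exists_norm_sub_average_sq_le {v : ι → E} {x : E} {R : ℝ} (hv : ∀ i, ‖v i‖ ≤ R)
    (hx : ∀ y, ∃ i, inner ℝ y x ≤ inner ℝ y (v i)) {k : ℕ} (hk : 0 < k) :
    ∃ t : Fin k → ι, ‖x - (k : ℝ)⁻¹ • ∑ l, v (t l)‖ ^ 2 ≤ R ^ 2 / k := by
  obtain ⟨t, ht⟩ := exists_norm_sum_sub_sq_le hv hx k
  have hk0 : (k : ℝ) ≠ 0 := by positivity
  have havg : x - (k : ℝ)⁻¹ • ∑ l, v (t l) = (k : ℝ)⁻¹ • ∑ l, (x - v (t l)) := by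
    rw [sum_sub_distrib, sum_const, card_univ, Fintype.card_fin, smul_sub,
      ← Nat.cast_smul_eq_nsmul ℝ, inv_smul_smul₀ hk0]
  refine ⟨t, ?_⟩
  calc ‖x - (k : ℝ)⁻¹ • ∑ l, v (t l)‖ ^ 2 = (k : ℝ)⁻¹ ^ 2 * ‖∑ l, (x - v (t l))‖ ^ 2 := by
        rw [havg, norm_smul, mul_pow, norm_inv, Real.norm_natCast]
    _ ≤ (k : ℝ)⁻¹ ^ 2 * (k * R ^ 2) := by gcongr
    _ = R ^ 2 / k := by field_simp

theorem exists_finset_net_dual_hull [Fintype ι] [Nonempty ι] {v : ι → E} (hv : ∀ i, ‖v i‖ ≤ 1)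
    {R : ℝ} (hR : 0 ≤ R) {k : ℕ} (hk : 0 < k) :
    ∃ S : Finset E, #S ≤ (2 * Fintype.card ι) ^ k ∧
      ∀ x : E, (∀ ⦃y : E⦄ ⦃B : ℝ⦄, 0 ≤ B → (∀ i, |inner ℝ y (v i)| ≤ B) → inner ℝ y x ≤ R * B) →
        ∃ s ∈ S, ‖x - s‖ ^ 2 ≤ R ^ 2 / k := by
  classical
  let signed : ι ⊕ ι → E := Sum.elim (fun i => R • v i) fun i => -(R • v i)
  have hsigned : ∀ q, ‖signed q‖ ≤ R := by
    have h (i : ι) : ‖R • v i‖ ≤ R := by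
      rw [norm_smul, Real.norm_of_nonneg hR]
      exact mul_le_of_le_one_right hR (hv i)
    rintro (i | i)
    · exact h i
    · exact (norm_neg _).trans_le (h i)
  refine ⟨univ.image fun t : Fin k → ι ⊕ ι => (k : ℝ)⁻¹ • ∑ l, signed (t l),
    card_image_le.trans_eq ?_, fun x hx => ?_⟩
  · rw [card_univ, Fintype.card_fun, Fintype.card_sum, Fintype.card_fin, two_mul]
  · have hbest (y : E) : ∃ q, inner ℝ y x ≤ inner ℝ y (signed q) := by
      obtain ⟨i, hi⟩ := Finite.exists_max fun i => |inner ℝ y (v i)|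
      have hyx := hx (abs_nonneg _) hi
      rcases abs_choice (inner ℝ y (v i)) with h | h
      · rw [h, ← inner_smul_right] at hyx
        exact ⟨Sum.inl i, hyx⟩
      · rw [h, mul_neg, ← inner_smul_right, ← inner_neg_right] at hyx
        exact ⟨Sum.inr i, hyx⟩
    obtain ⟨t, ht⟩ := exists_norm_sub_average_sq_le hsigned hbest hk
    exact ⟨_, mem_image_of_mem _ (mem_univ t), ht⟩

end Maurey

/-- The `L²`-normalized indicator of the rectangle `A × C`. -/
def rectAtom (A C : Finset ℕ) (i j : ℕ) : ℝ :=
  if i ∈ A ∧ j ∈ C then (√(#A * #C))⁻¹ else 0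

theorem sum_mul_rectAtom {A C : Finset ℕ} {M N : ℕ} (hA : A ⊆ range M) (hC : C ⊆ range N)
    (w : ℕ → ℕ → ℝ) :
    ∑ i ∈ range M, ∑ j ∈ range N, w i j * rectAtom A C i j =
      (∑ i ∈ A, ∑ j ∈ C, w i j) * (√(#A * #C))⁻¹ := by
  simp only [rectAtom, mul_ite, mul_zero, ite_and, sum_mul]
  rw [← sum_subset hA fun i _ hi => by simp only [if_neg hi, sum_const_zero]]
  refine sum_congr rfl fun i hi => ?_
  rw [← sum_subset hC fun j _ hj => by simp only [if_neg hj, ite_self]]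
  exact sum_congr rfl fun j hj => by rw [if_pos hi, if_pos hj]

theorem sum_rectAtom_sq_le_one {A C : Finset ℕ} {M N : ℕ} (hA : A ⊆ range M) (hC : C ⊆ range N) :
    ∑ i ∈ range M, ∑ j ∈ range N, rectAtom A C i j ^ 2 ≤ 1 := by
  have hrect : ∑ i ∈ A, ∑ j ∈ C, rectAtom A C i j = #A * #C * (√(#A * #C))⁻¹ := by
    calc _ = ∑ _i ∈ A, ∑ _j ∈ C, (√(#A * #C : ℝ))⁻¹ :=
          sum_congr rfl fun i hi => sum_congr rfl fun j hj => if_pos ⟨hi, hj⟩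
      _ = _ := by simp only [sum_const, nsmul_eq_mul, mul_assoc]
  simp only [sq]
  rw [sum_mul_rectAtom hA hC, hrect, mul_assoc, ← mul_inv, Real.mul_self_sqrt (by positivity)]
  exact mul_inv_le_one

theorem rectBound_of_abs_sum_mul_rectAtom_le {M N : ℕ} {w : ℕ → ℕ → ℝ} {B : ℝ}
    (h : ∀ ⦃a b c d⦄, a ≤ M → b ≤ M → c ≤ N → d ≤ N →
      |∑ i ∈ range M, ∑ j ∈ range N, w i j * rectAtom (Ico a b) (Ico c d) i j| ≤ B) :
    RectBound M N w B := by
  intro a c m n ha hc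
  have hA : Ico a (a + m) ⊆ range M := fun i hi => mem_range.2 ((mem_Ico.1 hi).2.trans_le ha)
  have hC : Ico c (c + n) ⊆ range N := fun j hj => mem_range.2 ((mem_Ico.1 hj).2.trans_le hc)
  have hpair := h ((Nat.le_add_right a m).trans ha) ha ((Nat.le_add_right c n).trans hc) hc
  rw [sum_mul_rectAtom hA hC] at hpair
  simp only [sum_Ico_eq_sum_range, Nat.card_Ico, Nat.add_sub_cancel_left] at hpair
  rcases (Nat.zero_le (m * n)).eq_or_lt with h0 | hpos
  · rcases Nat.mul_eq_zero.1 h0.symm with rfl | rfl <;> simp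
  · have hpos' : (0 : ℝ) < m * n := by exact_mod_cast hpos
    rwa [abs_mul, abs_inv, abs_of_nonneg (Real.sqrt_nonneg _), ← div_eq_mul_inv,
      div_le_iff₀ (Real.sqrt_pos.2 hpos')] at hpair

/-- Extension of a matrix by zero to all pairs of natural numbers. -/
def zeroExtend {m n : ℕ} (θ : Fin m → Fin n → ℝ) (i j : ℕ) : ℝ :=
  if h : i < m ∧ j < n then θ ⟨i, h.1⟩ ⟨j, h.2⟩ else 0

theorem zeroExtend_val {m n : ℕ} (θ : Fin m → Fin n → ℝ) (i : Fin m) (j : Fin n) :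
    zeroExtend θ i j = θ i j :=
  dif_pos ⟨i.isLt, j.isLt⟩

/-- The window `[0, M) × [0, N)` of a function, as a vector of Euclidean space. -/
def gridVec (M N : ℕ) : (ℕ → ℕ → ℝ) →ₗ[ℝ] EuclideanSpace ℝ (Fin M × Fin N) where
  toFun x := WithLp.toLp 2 fun p => x p.1 p.2
  map_add' _ _ := rfl
  map_smul' _ _ := rfl

theorem gridVec_surjective (M N : ℕ) : Function.Surjective (gridVec M N) := fun y =>
  ⟨zeroExtend fun i j => y (i, j), PiLp.ext fun p => zeroExtend_val (fun i j => y (i, j)) p.1 p.2⟩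

theorem inner_gridVec (M N : ℕ) (w x : ℕ → ℕ → ℝ) :
    inner ℝ (gridVec M N w) (gridVec M N x) = ∑ i ∈ range M, ∑ j ∈ range N, w i j * x i j := by
  simp only [PiLp.inner_apply, Fintype.sum_prod_type, sum_range]
  exact sum_congr rfl fun i _ => sum_congr rfl fun j _ => mul_comm _ _

theorem norm_sq_gridVec (M N : ℕ) (x : ℕ → ℕ → ℝ) :
    ‖gridVec M N x‖ ^ 2 = ∑ i ∈ range M, ∑ j ∈ range N, x i j ^ 2 := by
  simp only [← real_inner_self_eq_norm_sq, inner_gridVec, ← sq]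

theorem exists_finset_net_inRectHull (M N : ℕ) {R : ℝ} (hR : 0 ≤ R) {k : ℕ} (hk : 0 < k) :
    ∃ S : Finset (ℕ → ℕ → ℝ), #S ≤ (2 * ((M + 1) ^ 2 * (N + 1) ^ 2)) ^ k ∧
      ∀ x, InRectHull M N R x →
        ∃ s ∈ S, ∑ i ∈ range M, ∑ j ∈ range N, (x i j - s i j) ^ 2 ≤ R ^ 2 / k := by
  classical
  let atom : (Fin (M + 1) × Fin (M + 1)) × (Fin (N + 1) × Fin (N + 1)) → ℕ → ℕ → ℝ := fun q =>
    rectAtom (Ico q.1.1 q.1.2) (Ico q.2.1 q.2.2)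
  have hsub {K : ℕ} (a b : Fin (K + 1)) : Ico (a : ℕ) b ⊆ range K := fun i hi =>
    mem_range.2 ((mem_Ico.1 hi).2.trans_le b.is_le)
  have hatom (q) : ‖gridVec M N (atom q)‖ ≤ 1 := by
    rw [← sq_le_one_iff₀ (norm_nonneg _), norm_sq_gridVec]
    exact sum_rectAtom_sq_le_one (hsub _ _) (hsub _ _)
  obtain ⟨S, hcard, hS⟩ := exists_finset_net_dual_hull hatom hR hk
  refine ⟨S.image (Function.surjInv (gridVec_surjective M N)),
    card_image_le.trans (hcard.trans_eq ?_), fun x hx => ?_⟩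
  · simp only [Fintype.card_prod, Fintype.card_fin, sq]
  · obtain ⟨s, hs, hle⟩ := hS (gridVec M N x) fun y B hB hy => by
      obtain ⟨w, rfl⟩ := gridVec_surjective M N y
      simp only [inner_gridVec] at hy ⊢
      exact hx hB (rectBound_of_abs_sum_mul_rectAtom_le fun a b c d ha hb hc hd =>
        hy ((⟨a, Nat.lt_succ_of_le ha⟩, ⟨b, Nat.lt_succ_of_le hb⟩),
          (⟨c, Nat.lt_succ_of_le hc⟩, ⟨d, Nat.lt_succ_of_le hd⟩)))
    refine ⟨_, mem_image_of_mem _ hs, ?_⟩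
    rwa [← Function.surjInv_eq (gridVec_surjective M N) s, ← map_sub, norm_sq_gridVec] at hle

theorem sum_zeroExtend_sq {m n M N : ℕ} (hM : m ≤ M) (hN : n ≤ N) (θ : Fin m → Fin n → ℝ) :
    ∑ i ∈ range M, ∑ j ∈ range N, zeroExtend θ i j ^ 2 = frobSq θ := by
  have hrow {i j : ℕ} (hi : i ∉ range m) : zeroExtend θ i j ^ 2 = 0 := by
    rw [zeroExtend, dif_neg fun h => hi (mem_range.2 h.1), zero_pow two_ne_zero]
  have hcol {i j : ℕ} (hj : j ∉ range n) : zeroExtend θ i j ^ 2 = 0 := by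
    rw [zeroExtend, dif_neg fun h => hj (mem_range.2 h.2), zero_pow two_ne_zero]
  rw [← sum_subset (range_mono hM) fun _ _ hi => sum_eq_zero fun _ _ => hrow hi]
  simp only [← sum_subset (range_mono hN) fun _ _ hj => hcol hj, sum_range, zeroExtend_val, frobSq]

theorem frobSq_sub_restrict_le {m n M N : ℕ} (hM : m ≤ M) (hN : n ≤ N) (θ : Fin m → Fin n → ℝ)
    (s : ℕ → ℕ → ℝ) :
    frobSq (θ - fun (i : Fin m) (j : Fin n) => s i j) ≤
      ∑ i ∈ range M, ∑ j ∈ range N, (zeroExtend θ i j - s i j) ^ 2 := by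
  calc frobSq (θ - fun (i : Fin m) (j : Fin n) => s i j)
      = ∑ i ∈ range m, ∑ j ∈ range n, (zeroExtend θ i j - s i j) ^ 2 := by
        simp only [frobSq, sum_range, zeroExtend_val, Pi.sub_apply]
    _ ≤ _ := by
        refine (sum_le_sum_of_subset_of_nonneg (range_mono hM) fun i _ _ => by positivity).trans ?_
        exact sum_le_sum fun i _ =>
          sum_le_sum_of_subset_of_nonneg (range_mono hN) fun j _ _ => sq_nonneg _

theorem nonnegAntitone_zeroExtend {m n : ℕ} {f : Fin m → Fin n → ℝ} (hf : NonnegAntitone f) :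
    NonnegAntitone (zeroExtend f) := by
  have h0 (i j : ℕ) : 0 ≤ zeroExtend f i j := by
    unfold zeroExtend
    split_ifs
    exacts [hf.nonneg _ _, le_rfl]
  refine ⟨h0, fun i k j l hik hjl => ?_⟩
  by_cases hkl : k < m ∧ l < n
  · rw [zeroExtend, zeroExtend, dif_pos hkl,
      dif_pos ⟨hik.trans_lt hkl.1, hjl.trans_lt hkl.2⟩]
    exact hf.anti hik hjl
  · rw [zeroExtend, dif_neg hkl]
    exact h0 i j

theorem exists_finset_net_nonnegAntitone {m n U V : ℕ} (hU : m < 2 ^ U) (hV : n < 2 ^ V) (J : ℕ)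
    {k : ℕ} (hk : 0 < k) :
    ∃ S : Finset (Fin m → Fin n → ℝ), #S ≤ (2 * ((2 ^ U) ^ 2 * (2 ^ V) ^ 2)) ^ k ∧
      ∀ f, NonnegAntitone f → frobSq f ≤ 1 →
        ∃ s ∈ S, frobSq (f - s) ≤ 2 * (8 / 2 ^ J + ((1 + 2 * J) * (2 * √(U * V))) ^ 2 / k) := by
  classical
  obtain ⟨S, hcard, hS⟩ := exists_finset_net_inRectHull (2 ^ U - 1) (2 ^ V - 1)
    (R := (1 + 2 * J) * (2 * √(U * V))) (by positivity) hk
  rw [Nat.sub_add_cancel Nat.one_le_two_pow, Nat.sub_add_cancel Nat.one_le_two_pow] at hcard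
  refine ⟨S.image fun s (i : Fin m) (j : Fin n) => s i j, card_image_le.trans hcard,
    fun f hf hf1 => ?_⟩
  have hm := Nat.le_sub_one_of_lt hU
  have hn := Nat.le_sub_one_of_lt hV
  set F := zeroExtend f
  let G : ℕ → ℕ → ℝ := fun i j => F (blockRound J i) (blockRound J j)
  have hmass : ∑ i ∈ range (2 ^ U - 1), ∑ j ∈ range (2 ^ V - 1), F i j ^ 2 ≤ 1 :=
    (sum_zeroExtend_sq hm hn f).trans_le hf1
  obtain ⟨s, hs, hGs⟩ := hS G (inRectHull_blockRound (nonnegAntitone_zeroExtend hf) J hmass)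
  have hFG : ∑ i ∈ range (2 ^ U - 1), ∑ j ∈ range (2 ^ V - 1), (F i j - G i j) ^ 2 ≤ 8 / 2 ^ J :=
    (sum_blockRound_error_sq_le (nonnegAntitone_zeroExtend hf) U V J).trans
      (mul_le_of_le_one_right (by positivity) hmass)
  refine ⟨_, mem_image_of_mem _ hs, (frobSq_sub_restrict_le hm hn f s).trans ?_⟩
  calc ∑ i ∈ range (2 ^ U - 1), ∑ j ∈ range (2 ^ V - 1), (F i j - s i j) ^ 2
      ≤ ∑ i ∈ range (2 ^ U - 1), ∑ j ∈ range (2 ^ V - 1),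
          2 * ((F i j - G i j) ^ 2 + (G i j - s i j) ^ 2) := by
        refine sum_le_sum fun i _ => sum_le_sum fun j _ => ?_
        rw [← sub_add_sub_cancel (F i j) (G i j) (s i j)]
        exact add_sq_le
    _ = 2 * (∑ i ∈ range (2 ^ U - 1), ∑ j ∈ range (2 ^ V - 1), (F i j - G i j) ^ 2 +
          ∑ i ∈ range (2 ^ U - 1), ∑ j ∈ range (2 ^ V - 1), (G i j - s i j) ^ 2) := by
        simp only [← mul_sum, sum_add_distrib]
    _ ≤ _ := by gcongr

theorem frobSq_sub_le {m n : ℕ} (x y : Fin m → Fin n → ℝ) :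
    frobSq (x - y) ≤ 2 * (frobSq x + frobSq y) := by
  simp only [frobSq, ← sum_add_distrib, mul_sum, Pi.sub_apply]
  refine sum_le_sum fun i _ => sum_le_sum fun j _ => ?_
  linarith [sq_nonneg (x i j + y i j)]

theorem frobSq_posPart_le {m n : ℕ} (x : Fin m → Fin n → ℝ) : frobSq x⁺ ≤ frobSq x :=
  sum_le_sum fun i _ => sum_le_sum fun j _ => sq_le_sq.2 <|
    (abs_of_nonneg (posPart_nonneg (x i j))).trans_le (sup_le (le_abs_self _) (abs_nonneg _))

theorem frobSq_negPart_le {m n : ℕ} (x : Fin m → Fin n → ℝ) : frobSq x⁻ ≤ frobSq x :=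
  sum_le_sum fun i _ => sum_le_sum fun j _ => sq_le_sq.2 <|
    (abs_of_nonneg (negPart_nonneg (x i j))).trans_le (sup_le (neg_le_abs _) (abs_nonneg _))

theorem frobSq_comp_rev {m n : ℕ} (x : Fin m → Fin n → ℝ) :
    frobSq (fun i j => x i.rev j.rev) = frobSq x := by
  calc frobSq (fun i j => x i.rev j.rev) = ∑ i : Fin m, ∑ j, x i.rev j ^ 2 :=
        sum_congr rfl fun i _ => Equiv.sum_comp Fin.revPerm fun j => x i.rev j ^ 2
    _ = frobSq x := Equiv.sum_comp Fin.revPerm fun i => ∑ j, x i j ^ 2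

theorem Isotonic.nonnegAntitone_posPart_rev {m n : ℕ} {θ : Fin m → Fin n → ℝ} (hθ : Isotonic θ) :
    NonnegAntitone fun i j => θ⁺ (Fin.rev i) (Fin.rev j) :=
  ⟨fun _ _ => posPart_nonneg _, fun _ _ _ _ hi hj =>
    posPart_mono (hθ (Fin.rev_le_rev.2 hi) (Fin.rev_le_rev.2 hj))⟩

theorem Isotonic.nonnegAntitone_negPart {m n : ℕ} {θ : Fin m → Fin n → ℝ} (hθ : Isotonic θ) :
    NonnegAntitone θ⁻ :=
  ⟨fun _ _ => negPart_nonneg _, fun _ _ _ _ hi hj => negPart_anti (hθ hi hj)⟩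

theorem exists_finset_net_isotonic_of_nonnegAntitone {m n : ℕ} {r : ℝ}
    {S : Finset (Fin m → Fin n → ℝ)}
    (hS : ∀ f, NonnegAntitone f → frobSq f ≤ 1 → ∃ s ∈ S, frobSq (f - s) ≤ r) :
    ∃ T : Finset (Fin m → Fin n → ℝ), #T ≤ #S ^ 2 ∧
      ∀ θ, Isotonic θ → frobSq θ ≤ 1 → ∃ t ∈ T, frobSq (θ - t) ≤ 4 * r := by
  classical
  refine ⟨image₂ (fun s t => (fun i j => s (Fin.rev i) (Fin.rev j)) - t) S S,
    (card_image₂_le _ _ _).trans_eq (sq _).symm, fun θ hθ hθ1 => ?_⟩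
  obtain ⟨s, hs, hes⟩ := hS _ hθ.nonnegAntitone_posPart_rev
    ((frobSq_comp_rev θ⁺).trans_le ((frobSq_posPart_le θ).trans hθ1))
  obtain ⟨t, ht, het⟩ := hS _ hθ.nonnegAntitone_negPart ((frobSq_negPart_le θ).trans hθ1)
  refine ⟨_, mem_image₂_of_mem hs ht, ?_⟩
  rw [← frobSq_comp_rev] at hes
  simp only [Pi.sub_apply, Fin.rev_rev] at hes
  calc frobSq (θ - ((fun i j => s i.rev j.rev) - t))
      = frobSq ((θ⁺ - fun i j => s i.rev j.rev) - (θ⁻ - t)) := by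
        rw [sub_sub_sub_comm, posPart_sub_negPart]
    _ ≤ 2 * (r + r) := (frobSq_sub_le _ _).trans (by gcongr; exact hes)
    _ = 4 * r := by ring

theorem exists_finset_net_isotonic {m n U V : ℕ} (hU : m < 2 ^ U) (hV : n < 2 ^ V) {J k : ℕ}
    (hk : 0 < k) {ε : ℝ} (hJ : 128 ≤ ε ^ 2 * 2 ^ J)
    (hkε : 64 * ((1 + 2 * J) ^ 2 * (U * V)) ≤ ε ^ 2 * k) :
    ∃ T : Finset (Fin m → Fin n → ℝ), #T ≤ ((2 * ((2 ^ U) ^ 2 * (2 ^ V) ^ 2)) ^ k) ^ 2 ∧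
      ∀ θ, Isotonic θ → frobSq θ ≤ 1 → ∃ t ∈ T, frobSq (θ - t) ≤ ε ^ 2 := by
  obtain ⟨S, hScard, hS⟩ := exists_finset_net_nonnegAntitone hU hV J hk
  obtain ⟨T, hTcard, hT⟩ := exists_finset_net_isotonic_of_nonnegAntitone hS
  refine ⟨T, hTcard.trans (Nat.pow_le_pow_left hScard 2), fun θ hθ hθ1 => ?_⟩
  obtain ⟨t, ht, hle⟩ := hT θ hθ hθ1
  have hround : 8 / (2 : ℝ) ^ J ≤ ε ^ 2 / 16 := by
    rw [div_le_iff₀ (by positivity)]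
    linarith
  have hsample : ((1 + 2 * J) * (2 * √(U * V))) ^ 2 / (k : ℝ) ≤ ε ^ 2 / 16 := by
    rw [div_le_iff₀ (by positivity), mul_pow, mul_pow, Real.sq_sqrt (by positivity)]
    linarith
  exact ⟨t, ht, hle.trans (by linarith)⟩

theorem exists_pow_two_resolution {ε : ℝ} (hε : 0 < ε) (hε1 : ε ≤ 1) :
    ∃ J : ℕ, 128 ≤ ε ^ 2 * 2 ^ J ∧ 1 + 2 * (J : ℝ) ≤ 17 * (1 - Real.log ε) := by
  have hlog2 := Real.log_two_gt_d9
  have hlogε : Real.log ε ≤ 0 := Real.log_nonpos hε.le hε1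
  set z := (7 * Real.log 2 - 2 * Real.log ε) / Real.log 2
  have hz0 : 0 ≤ z := div_nonneg (by linarith) (by linarith)
  have hzlog : z * Real.log 2 = 7 * Real.log 2 - 2 * Real.log ε :=
    div_mul_cancel₀ _ (by linarith)
  refine ⟨⌈z⌉₊, ?_, ?_⟩
  · have hexp : 7 * Real.log 2 ≤ 2 * Real.log ε + ⌈z⌉₊ * Real.log 2 := by
      have := mul_le_mul_of_nonneg_right (Nat.le_ceil z) (by linarith : 0 ≤ Real.log 2)
      linarith
    rw [show (128 : ℝ) = 2 ^ 7 by norm_num, ← Real.log_le_log_iff (by positivity) (by positivity),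
      Real.log_mul (by positivity) (by positivity), Real.log_pow, Real.log_pow, Real.log_pow]
    exact_mod_cast hexp
  · have hceil := Nat.ceil_lt_add_one hz0
    nlinarith

theorem exists_natCast_sq_mul_between {x ε : ℝ} (hx : 1 ≤ x) (hε : 0 < ε) (hε1 : ε ≤ 1) :
    ∃ k : ℕ, 0 < k ∧ 64 * x ≤ ε ^ 2 * k ∧ ε ^ 2 * k ≤ 65 * x := by
  have hε2 : 0 < ε ^ 2 := by positivity
  refine ⟨⌈64 * x / ε ^ 2⌉₊, Nat.ceil_pos.2 (by positivity), ?_, ?_⟩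
  · rw [mul_comm (ε ^ 2), ← div_le_iff₀ hε2]
    exact Nat.le_ceil _
  · calc ε ^ 2 * (⌈64 * x / ε ^ 2⌉₊ : ℝ) ≤ ε ^ 2 * (64 * x / ε ^ 2 + 1) := by
          gcongr
          exact (Nat.ceil_lt_add_one (by positivity)).le
      _ = 64 * x + ε ^ 2 := by field_simp
      _ ≤ 65 * x := by linarith [pow_le_one₀ hε.le hε1 (n := 2)]

theorem log_two_le_log_natCast {n : ℕ} (hn : 1 < n) : Real.log 2 ≤ Real.log n :=
  Real.log_le_log two_pos (by exact_mod_cast hn)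

theorem natLog_two_add_one_le {n : ℕ} (hn : 1 < n) :
    ((Nat.log 2 n + 1 : ℕ) : ℝ) ≤ 3 * Real.log n := by
  have hfloor : (Nat.log 2 n : ℝ) * Real.log 2 ≤ Real.log n := by
    rw [← Real.log_pow]
    exact Real.log_le_log (by positivity) (by exact_mod_cast Nat.pow_log_le_self 2 (by lia))
  push_cast
  nlinarith [Real.log_two_gt_d9, log_two_le_log_natCast hn]

theorem log_natCast_mono : Monotone fun n : ℕ => Real.log n := by
  intro m n h
  rcases Nat.eq_zero_or_pos m with rfl | hm
  · simpa using Real.log_natCast_nonneg n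
  · exact Real.log_le_log (by exact_mod_cast hm) (by exact_mod_cast h)

theorem log_rectangle_count_le {m n : ℕ} (hm : 1 < m) (hn : 1 < n) :
    Real.log (2 * ((2 ^ (Nat.log 2 m + 1)) ^ 2 * (2 ^ (Nat.log 2 n + 1)) ^ 2)) ≤
      14 * (Real.log m * Real.log n) := by
  have hU := natLog_two_add_one_le hm
  have hV := natLog_two_add_one_le hn
  have hm2 := log_two_le_log_natCast hm
  have hn2 := log_two_le_log_natCast hn
  have hlog2 := Real.log_two_gt_d9
  calc _ = (1 + 2 * ((Nat.log 2 m + 1 : ℕ) : ℝ) + 2 * ((Nat.log 2 n + 1 : ℕ) : ℝ)) *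
        Real.log 2 := by
        rw [← pow_mul, ← pow_mul, ← pow_add, ← pow_succ', Real.log_pow]
        push_cast
        ring
    _ ≤ (1 + 2 * (3 * Real.log m) + 2 * (3 * Real.log n)) * Real.log 2 := by gcongr
    _ ≤ 14 * (Real.log m * Real.log n) := by nlinarith

theorem exists_finset_net_isotonic_log_card_le {m n : ℕ} (hm : 1 < m) (hn : 1 < n) {ε : ℝ}
    (hε : 0 < ε) (hε1 : ε ≤ 1) :
    ∃ T : Finset (Fin m → Fin n → ℝ),
      Real.log #T ≤ (2200 * (Real.log m * Real.log n) * ((1 - Real.log ε) / ε)) ^ 2 ∧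
      ∀ θ, Isotonic θ → frobSq θ ≤ 1 → ∃ t ∈ T, frobSq (θ - t) ≤ ε ^ 2 := by
  have hU := natLog_two_add_one_le hm
  have hV := natLog_two_add_one_le hn
  have hcount := log_rectangle_count_le hm hn
  set U := Nat.log 2 m + 1
  set V := Nat.log 2 n + 1
  set a := Real.log m
  set b := Real.log n
  have hUV : (1 : ℝ) ≤ U * V := by exact_mod_cast Nat.mul_pos (Nat.succ_pos _) (Nat.succ_pos _)
  obtain ⟨J, hJ, hJle⟩ := exists_pow_two_resolution hε hε1
  have hJ1 : (1 : ℝ) ≤ 1 + 2 * J := le_add_of_nonneg_right (by positivity)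
  obtain ⟨k, hk, hkε, hkle⟩ := exists_natCast_sq_mul_between
    (one_le_mul_of_one_le_of_one_le (one_le_pow₀ hJ1 (n := 2)) hUV) hε hε1
  obtain ⟨T, hTcard, hT⟩ := exists_finset_net_isotonic (Nat.lt_pow_succ_log_self one_lt_two m)
    (Nat.lt_pow_succ_log_self one_lt_two n) hk hJ hkε
  refine ⟨T, ?_, hT⟩
  have hsample : ε ^ 2 * k ≤ 65 * ((17 * (1 - Real.log ε)) ^ 2 * (3 * a * (3 * b))) := by
    refine hkle.trans ?_
    gcongr
  calc Real.log #T ≤ Real.log (((2 * ((2 ^ U) ^ 2 * (2 ^ V) ^ 2)) ^ k) ^ 2 : ℕ) :=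
        log_natCast_mono hTcard
    _ = 2 * (ε ^ 2 * k) * Real.log (2 * ((2 ^ U) ^ 2 * (2 ^ V) ^ 2)) / ε ^ 2 := by
        push_cast
        rw [Real.log_pow, Real.log_pow]
        push_cast
        field_simp
    _ ≤ 2 * (65 * ((17 * (1 - Real.log ε)) ^ 2 * (3 * a * (3 * b)))) * (14 * (a * b)) / ε ^ 2 := by
        gcongr
        exact_mod_cast Real.log_natCast_nonneg (2 * ((2 ^ U) ^ 2 * (2 ^ V) ^ 2))
    _ = 4733820 * ((a * b) * ((1 - Real.log ε) / ε)) ^ 2 := by ring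
    _ ≤ 2200 ^ 2 * ((a * b) * ((1 - Real.log ε) / ε)) ^ 2 := by gcongr; norm_num
    _ = _ := by ring

section CoverNum

variable {m n : ℕ} {F : Set (Fin m → Fin n → ℝ)}

theorem coverNum_le_card {ε : ℝ} {S : Finset (Fin m → Fin n → ℝ)}
    (hS : ∀ θ ∈ F, ∃ s ∈ S, frobSq (θ - s) ≤ ε ^ 2) : coverNum ε F ≤ #S :=
  Nat.sInf_le ⟨S, rfl, hS⟩

theorem exists_finset_net_card_eq_coverNum {ε : ℝ}
    (h : ∃ S : Finset (Fin m → Fin n → ℝ), ∀ θ ∈ F, ∃ s ∈ S, frobSq (θ - s) ≤ ε ^ 2) :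
    ∃ S : Finset (Fin m → Fin n → ℝ), #S = coverNum ε F ∧
      ∀ θ ∈ F, ∃ s ∈ S, frobSq (θ - s) ≤ ε ^ 2 := by
  obtain ⟨S, hS⟩ := h
  exact Nat.sInf_mem (s := {k | ∃ S : Finset (Fin m → Fin n → ℝ), #S = k ∧
    ∀ θ ∈ F, ∃ s ∈ S, frobSq (θ - s) ≤ ε ^ 2}) ⟨_, S, rfl, hS⟩

-- `coverNum x F` takes the junk value `0` when `F` has no finite net of radius `x`.
theorem coverNum_anti {x y : ℝ} (hx : 0 ≤ x) (hxy : x ≤ y)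
    (h : ∃ S : Finset (Fin m → Fin n → ℝ), ∀ θ ∈ F, ∃ s ∈ S, frobSq (θ - s) ≤ x ^ 2) :
    coverNum y F ≤ coverNum x F := by
  obtain ⟨S, hcard, hS⟩ := exists_finset_net_card_eq_coverNum h
  refine (coverNum_le_card fun θ hθ => ?_).trans_eq hcard
  obtain ⟨s, hs, hle⟩ := hS θ hθ
  exact ⟨s, hs, hle.trans (pow_le_pow_left₀ hx hxy 2)⟩

end CoverNum

section IsotonicBall

variable {m n : ℕ}

theorem antitoneOn_sqrt_log_coverNum_isotonic (hm : 1 < m) (hn : 1 < n) :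
    AntitoneOn (fun ε => √(Real.log
      (coverNum ε {θ : Fin m → Fin n → ℝ | Isotonic θ ∧ frobSq θ ≤ 1}))) (Set.Ioc 0 1) := by
  intro x hx y _ hxy
  obtain ⟨S, -, hS⟩ := exists_finset_net_isotonic_log_card_le hm hn hx.1 hx.2
  exact Real.sqrt_le_sqrt
    (log_natCast_mono (coverNum_anti hx.1.le hxy ⟨S, fun θ hθ => hS θ hθ.1 hθ.2⟩))

theorem one_sub_log_le (hm : 1 < m) (hn : 1 < n) {ε : ℝ} (hε : 0 < ε) :
    1 - Real.log ε ≤ Real.log (4 * √(Real.log m * Real.log n) / ε) := by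
  have hlog2 := Real.log_two_gt_d9
  have hsqrt : Real.log 2 ≤ √(Real.log m * Real.log n) := by
    refine Real.le_sqrt_of_sq_le ?_
    rw [sq]
    exact mul_le_mul (log_two_le_log_natCast hm) (log_two_le_log_natCast hn) (by linarith)
      (Real.log_natCast_nonneg m)
  have hpos : 0 < √(Real.log m * Real.log n) := by linarith
  rw [Real.log_div (by positivity) hε.ne', sub_le_sub_iff_right,
    Real.le_log_iff_exp_le (by positivity)]
  linarith [Real.exp_one_lt_d9]

theorem sqrt_log_coverNum_isotonic_le (hm : 1 < m) (hn : 1 < n) {ε : ℝ} (hε : 0 < ε)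
    (hε1 : ε ≤ 1) :
    √(Real.log (coverNum ε {θ : Fin m → Fin n → ℝ | Isotonic θ ∧ frobSq θ ≤ 1})) ≤
      2200 * (Real.log m * Real.log n) *
        (Real.log (4 * √(Real.log m * Real.log n) / ε) / ε) := by
  obtain ⟨S, hlog, hS⟩ := exists_finset_net_isotonic_log_card_le hm hn hε hε1
  have hε0 : 0 ≤ 1 - Real.log ε := by linarith [Real.log_nonpos hε.le hε1]
  calc _ ≤ √(Real.log #S) :=
        Real.sqrt_le_sqrt (log_natCast_mono (coverNum_le_card fun θ hθ => hS θ hθ.1 hθ.2))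
    _ ≤ 2200 * (Real.log m * Real.log n) * ((1 - Real.log ε) / ε) :=
        Real.sqrt_le_iff.2 ⟨by positivity, hlog⟩
    _ ≤ _ := by
        gcongr
        exact one_sub_log_le hm hn hε

end IsotonicBall

theorem continuousOn_log_div_div {c : ℝ} (hc : c ≠ 0) {s : Set ℝ} (hs : ∀ x ∈ s, x ≠ 0) :
    ContinuousOn (fun x => Real.log (c / x) / x) s :=
  ((continuousOn_const.div continuousOn_id hs).log fun x hx => div_ne_zero hc (hs x hx)).div
    continuousOn_id hs

theorem hasDerivAt_log_div_sq {c x : ℝ} (hc : c ≠ 0) (hx : x ≠ 0) :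
    HasDerivAt (fun ε => -(Real.log (c / ε) ^ 2 / 2)) (Real.log (c / x) / x) x := by
  have hdiv : HasDerivAt (fun ε => c / ε) (-c / x ^ 2) x :=
    ((hasDerivAt_const x c).div (hasDerivAt_id x) hx).congr_deriv
      (by simp only [id, zero_mul, mul_one, zero_sub])
  refine ((((hdiv.log (div_ne_zero hc hx)).pow 2).div_const 2).neg).congr_deriv ?_
  field_simp
  norm_num

theorem integral_log_div_div_le {c δ : ℝ} (hc : c ≠ 0) (hδ : 0 < δ) :
    ∫ ε in δ..1, Real.log (c / ε) / ε ≤ Real.log (c / δ) ^ 2 / 2 := by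
  have hne : ∀ x ∈ Set.uIcc δ 1, x ≠ 0 := fun x hx => ((lt_min hδ one_pos).trans_le hx.1).ne'
  rw [intervalIntegral.integral_eq_sub_of_hasDerivAt
    (fun x hx => hasDerivAt_log_div_sq hc (hne x hx))
    (continuousOn_log_div_div hc hne).intervalIntegrable]
  linarith [sq_nonneg (Real.log (c / 1))]

end Development

/-- **Theorem 5, inequality (cor1) (entropy integral bound).** There is a universal
constant `C > 0` such that for all `n1, n2 > 1` and every `0 < δ ≤ 1`,
`∫_δ^1 sqrt(log N(ε, B(0,1))) dε
  ≤ (sqrt C / 2) (log n1)(log n2) (log(4 sqrt(log n1 log n2)/δ))²`. -/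
theorem isotonic_ball_entropy_integral :
    ∃ C : ℝ, 0 < C ∧
      ∀ (n1 n2 : ℕ), 1 < n1 → 1 < n2 → ∀ δ : ℝ, 0 < δ → δ ≤ 1 →
        (∫ ε in δ..1, Real.sqrt (Real.log
            (coverNum ε {θ : Fin n1 → Fin n2 → ℝ | Isotonic θ ∧ frobSq θ ≤ 1}))) ≤
          Real.sqrt C / 2 * (Real.log n1 * Real.log n2) *
            Real.log (4 * Real.sqrt (Real.log n1 * Real.log n2) / δ) ^ 2 := by
  refine ⟨2200 ^ 2, by positivity, fun n1 n2 h1 h2 δ hδ hδ1 => ?_⟩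
  have hl1 : 0 < Real.log n1 := Real.log_pos (by exact_mod_cast h1)
  have hl2 : 0 < Real.log n2 := Real.log_pos (by exact_mod_cast h2)
  set c := 4 * √(Real.log n1 * Real.log n2)
  have hc : c ≠ 0 := by positivity
  have hsub : Set.uIcc δ 1 ⊆ Set.Ioc 0 1 := by
    rw [Set.uIcc_of_le hδ1]
    exact fun x hx => ⟨hδ.trans_le hx.1, hx.2⟩
  have hint : IntervalIntegrable (fun ε => Real.log (c / ε) / ε) volume δ 1 :=
    (continuousOn_log_div_div hc fun x hx => (hsub hx).1.ne').intervalIntegrable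
  calc _ ≤ ∫ ε in δ..1, 2200 * (Real.log n1 * Real.log n2) * (Real.log (c / ε) / ε) :=
        intervalIntegral.integral_mono_on hδ1
          ((antitoneOn_sqrt_log_coverNum_isotonic h1 h2).mono hsub).intervalIntegrable
          (hint.const_mul _) fun ε hε =>
            sqrt_log_coverNum_isotonic_le h1 h2 (hδ.trans_le hε.1) hε.2
    _ ≤ 2200 * (Real.log n1 * Real.log n2) * (Real.log (c / δ) ^ 2 / 2) := by
        rw [intervalIntegral.integral_const_mul]
        gcongr
        exact integral_log_div_div_le hc hδ
    _ = _ := by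
        rw [Real.sqrt_sq (by norm_num)]
        ring
end
end

section
/- For every θ* ∈ M, the risk of the isotonic least squares estimator satisfies R(θ*, θ̂) ≤ (1/n) · inf over θ ∈ M of ( ||θ* − θ||² + E|| Π(ε, T_M(θ)) ||² ), where Π(ε, T_M(θ)) is the Euclidean projection of the noise matrix ε onto the tangent cone T_M(θ) and the expectation is over ε. -/
open MeasureTheory ProbabilityTheory

noncomputable section

/-- The law of an `n1 × n2` matrix with i.i.d. `N(0, σ²)` entries. -/
def noiseMeasure (n1 n2 : ℕ) (σ : ℝ) : Measure (Fin n1 → Fin n2 → ℝ) :=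
  Measure.pi fun _ => Measure.pi fun _ => gaussianReal 0 ⟨σ ^ 2, sq_nonneg σ⟩

/-- `lse` is the least squares estimator: for every data matrix `y`, `lse y` minimizes
the squared Frobenius distance to `y` over the cone of isotonic matrices. -/
def IsLSE {n1 n2 : ℕ} (lse : (Fin n1 → Fin n2 → ℝ) → Fin n1 → Fin n2 → ℝ) : Prop :=
  ∀ y, Isotonic (lse y) ∧ ∀ θ, Isotonic θ → frobSq (y - lse y) ≤ frobSq (y - θ)

/-- The risk `R(θ*, est) = E ‖est(θ* + ε) − θ*‖² / n`, where `ε` has i.i.d. `N(0,σ²)`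
entries and `n = n1 n2`. -/
def risk {n1 n2 : ℕ} (σ : ℝ) (θstar : Fin n1 → Fin n2 → ℝ)
    (est : (Fin n1 → Fin n2 → ℝ) → Fin n1 → Fin n2 → ℝ) : ℝ :=
  (∫ ε, frobSq (est (θstar + ε) - θstar) ∂noiseMeasure n1 n2 σ) / (n1 * n2)

/-- The tangent cone of the isotonic cone `M` at `θ`: the closure of
`{α (u − θ) : α > 0, u ∈ M}`. -/
def tangentCone {n1 n2 : ℕ} (θ : Fin n1 → Fin n2 → ℝ) : Set (Fin n1 → Fin n2 → ℝ) :=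
  closure {v | ∃ α : ℝ, 0 < α ∧ ∃ u, Isotonic u ∧ v = α • (u - θ)}

/-- The Euclidean (Frobenius) projection of `v` onto a set `K`: the point of `K`
minimizing the squared Frobenius distance to `v` (when such a point exists and is
unique, `Classical.epsilon` returns it). -/
def projC {n1 n2 : ℕ} (K : Set (Fin n1 → Fin n2 → ℝ)) (v : Fin n1 → Fin n2 → ℝ) :
    Fin n1 → Fin n2 → ℝ :=
  Classical.epsilon fun p => p ∈ K ∧ ∀ u ∈ K, frobSq (v - p) ≤ frobSq (v - u)

/-!
Let `p` be the nearest point of `M` to `θ* + ε` and let `q` be the nearest point of `T_M(θ)` to `ε`.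
Since `θ* + ε - p` makes an obtuse angle with `θ - p`,
`‖p - θ*‖² ≤ ‖θ* - θ‖² + (‖ε‖² - ‖ε - (p - θ)‖²)`. As `p - θ ∈ T_M(θ)`, the last bracket is at most
`‖ε‖² - ‖ε - q‖²`, which equals `‖q‖²` by Pythagoras, `T_M(θ)` being a cone. The same identity
`‖q‖² = ‖ε‖² - dist(ε, T_M(θ))²` shows that `‖q‖²` depends continuously on `ε` and is at most
`‖ε‖²`, hence is integrable, and taking expectations gives the bound.
-/

/-- `p` is a point of `K` nearest to `v`. This is a relation, not a function, so that neither
existence nor uniqueness of nearest points has to be assumed. -/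
def IsMetricProj {X : Type*} [PseudoMetricSpace X] (K : Set X) (v p : X) : Prop :=
  p ∈ K ∧ ∀ ⦃u⦄, u ∈ K → dist v p ≤ dist v u

namespace IsMetricProj

section MetricSpace

variable {X : Type*} [PseudoMetricSpace X] {K : Set X} {v p : X}

lemma infDist_eq (h : IsMetricProj K v p) : Metric.infDist v K = dist v p :=
  le_antisymm (Metric.infDist_le_dist_of_mem h.1) ((Metric.le_infDist ⟨p, h.1⟩).2 h.2)

lemma exists_of_isClosed [ProperSpace X] (hK : IsClosed K) (hne : K.Nonempty) (v : X) :
    ∃ p, IsMetricProj K v p := by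
  obtain ⟨p, hp, hdist⟩ := hK.exists_infDist_eq_dist hne v
  exact ⟨p, hp, fun u hu => hdist ▸ Metric.infDist_le_dist_of_mem hu⟩

end MetricSpace

variable {E : Type*} [NormedAddCommGroup E] [InnerProductSpace ℝ E] {K : Set E} {v p : E}

lemma inner_sub_sub_nonpos (hK : Convex ℝ K) (h : IsMetricProj K v p) {u : E} (hu : u ∈ K) :
    inner ℝ (v - p) (u - p) ≤ 0 := by
  refine (norm_eq_iInf_iff_real_inner_le_zero hK h.1).1 ?_ u hu
  simp only [← dist_eq_norm, ← Metric.infDist_eq_iInf, h.infDist_eq]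

lemma norm_sub_sq_le_of_convex {x θ ε : E} (hK : Convex ℝ K) (h : IsMetricProj K (x + ε) p)
    (hθ : θ ∈ K) :
    ‖p - x‖ ^ 2 ≤ ‖x - θ‖ ^ 2 + (‖ε‖ ^ 2 - ‖ε - (p - θ)‖ ^ 2) := by
  have obtuse : inner ℝ (x - p + ε) (θ - p) ≤ 0 := by
    simpa only [sub_add_eq_add_sub] using h.inner_sub_sub_nonpos hK hθ
  have expand_bias : ‖x - θ‖ ^ 2 = ‖x - p‖ ^ 2 - 2 * inner ℝ (x - p) (θ - p) + ‖θ - p‖ ^ 2 := by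
    rw [← norm_sub_sq_real, sub_sub_sub_cancel_right]
  have expand_noise : ‖ε - (p - θ)‖ ^ 2 = ‖ε‖ ^ 2 + 2 * inner ℝ ε (θ - p) + ‖θ - p‖ ^ 2 := by
    rw [← norm_add_sq_real, sub_eq_add_neg ε, neg_sub]
  rw [inner_add_left] at obtuse
  rw [norm_sub_rev p x]
  linarith

lemma inner_sub_self_eq_zero (hK : ∀ t : ℝ, 0 < t → ∀ u ∈ K, t • u ∈ K)
    (h : IsMetricProj K v p) : inner ℝ (v - p) p = 0 := by
  have hmin : IsLocalMin (fun t : ℝ => ‖v - t • p‖ ^ 2) 1 := by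
    filter_upwards [lt_mem_nhds one_pos] with t ht
    simp only [one_smul, ← dist_eq_norm]
    gcongr
    exact h.2 (hK t ht p h.1)
  have hderiv : HasDerivAt (fun t : ℝ => ‖v - t • p‖ ^ 2) (2 * inner ℝ (v - p) (-p)) 1 := by
    simpa using (((hasDerivAt_id (1 : ℝ)).smul_const p).const_sub v).norm_sq
  simpa using hmin.hasDerivAt_eq_zero hderiv

lemma norm_sq_eq_sub_infDist_sq (hK : ∀ t : ℝ, 0 < t → ∀ u ∈ K, t • u ∈ K)
    (h : IsMetricProj K v p) : ‖p‖ ^ 2 = ‖v‖ ^ 2 - Metric.infDist v K ^ 2 := by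
  have pythagoras : ‖v - p + p‖ ^ 2 = ‖v - p‖ ^ 2 + ‖p‖ ^ 2 := by
    rw [norm_add_sq_real, h.inner_sub_self_eq_zero hK, mul_zero, add_zero]
  rw [h.infDist_eq, dist_eq_norm, eq_sub_iff_add_eq', ← pythagoras, sub_add_cancel]

lemma norm_sq_sub_norm_sub_sq_le (hK : ∀ t : ℝ, 0 < t → ∀ u ∈ K, t • u ∈ K)
    (h : IsMetricProj K v p) {u : E} (hu : u ∈ K) : ‖v‖ ^ 2 - ‖v - u‖ ^ 2 ≤ ‖p‖ ^ 2 := by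
  rw [h.norm_sq_eq_sub_infDist_sq hK, h.infDist_eq, ← dist_eq_norm]
  gcongr
  exact h.2 hu

theorem norm_sub_sq_le_add {C : Set E} {x θ ε q : E} (hC : Convex ℝ C)
    (hK : ∀ t : ℝ, 0 < t → ∀ u ∈ K, t • u ∈ K) (hθ : θ ∈ C)
    (hp : IsMetricProj C (x + ε) p) (hpK : p - θ ∈ K) (hq : IsMetricProj K ε q) :
    ‖p - x‖ ^ 2 ≤ ‖x - θ‖ ^ 2 + ‖q‖ ^ 2 :=
  calc ‖p - x‖ ^ 2 ≤ ‖x - θ‖ ^ 2 + (‖ε‖ ^ 2 - ‖ε - (p - θ)‖ ^ 2) :=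
        hp.norm_sub_sq_le_of_convex hC hθ
    _ ≤ ‖x - θ‖ ^ 2 + ‖q‖ ^ 2 := by
        gcongr
        exact hq.norm_sq_sub_norm_sub_sq_le hK hpK

section Random

variable {Ω : Type*} [MeasurableSpace Ω] {P : Measure Ω} {ξ : Ω → E}

lemma integrable_norm_sq {q : Ω → E} (hK : ∀ t : ℝ, 0 < t → ∀ u ∈ K, t • u ∈ K)
    (hξ : MemLp ξ 2 P) (hq : ∀ ω, IsMetricProj K (ξ ω) (q ω)) :
    Integrable (fun ω => ‖q ω‖ ^ 2) P := by
  have hq_eq ω : ‖q ω‖ ^ 2 = ‖ξ ω‖ ^ 2 - Metric.infDist (ξ ω) K ^ 2 :=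
    (hq ω).norm_sq_eq_sub_infDist_sq hK
  have hmeas : AEStronglyMeasurable (fun ω => ‖q ω‖ ^ 2) P := by
    simp only [hq_eq]
    exact (hξ.1.norm.pow 2).sub
      (((Metric.continuous_infDist_pt K).comp_aestronglyMeasurable hξ.1).pow 2)
  refine ((memLp_two_iff_integrable_sq_norm hξ.1).1 hξ).mono' hmeas (ae_of_all _ fun ω => ?_)
  rw [Real.norm_of_nonneg (sq_nonneg _), hq_eq]
  exact sub_le_self _ (sq_nonneg _)

theorem integral_norm_sub_sq_le [IsProbabilityMeasure P] {C : Set E} {x θ : E} {p q : Ω → E}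
    (hC : Convex ℝ C) (hK : ∀ t : ℝ, 0 < t → ∀ u ∈ K, t • u ∈ K) (hθ : θ ∈ C)
    (hCK : ∀ u ∈ C, u - θ ∈ K) (hξ : MemLp ξ 2 P)
    (hp : ∀ ω, IsMetricProj C (x + ξ ω) (p ω)) (hq : ∀ ω, IsMetricProj K (ξ ω) (q ω)) :
    ∫ ω, ‖p ω - x‖ ^ 2 ∂P ≤ ‖x - θ‖ ^ 2 + ∫ ω, ‖q ω‖ ^ 2 ∂P := by
  have hint : Integrable (fun ω => ‖q ω‖ ^ 2) P := integrable_norm_sq hK hξ hq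
  calc ∫ ω, ‖p ω - x‖ ^ 2 ∂P ≤ ∫ ω, (‖x - θ‖ ^ 2 + ‖q ω‖ ^ 2) ∂P :=
        integral_mono_of_nonneg (ae_of_all _ fun _ => sq_nonneg _)
          ((integrable_const _).add hint)
          (ae_of_all _ fun ω => (hp ω).norm_sub_sq_le_add hC hK hθ (hCK _ (hp ω).1) (hq ω))
    _ = ‖x - θ‖ ^ 2 + ∫ ω, ‖q ω‖ ^ 2 ∂P := by
        rw [integral_add (integrable_const _) hint, integral_const, probReal_univ, one_smul]

end Random

end IsMetricProj

section Frobenius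

variable {n1 n2 : ℕ}

/-- The vectorization of a matrix. It turns `frobSq` into the squared Euclidean norm, whereas the
norm that `Fin n1 → Fin n2 → ℝ` carries by default is the supremum norm. -/
def frobVec : (Fin n1 → Fin n2 → ℝ) ≃L[ℝ] EuclideanSpace ℝ (Fin n1 × Fin n2) :=
  ((LinearEquiv.curry ℝ ℝ (Fin n1) (Fin n2)).symm ≪≫ₗ
    (WithLp.linearEquiv 2 ℝ (Fin n1 × Fin n2 → ℝ)).symm).toContinuousLinearEquiv

lemma norm_frobVec_sq (a : Fin n1 → Fin n2 → ℝ) : ‖frobVec a‖ ^ 2 = frobSq a := by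
  rw [EuclideanSpace.real_norm_sq_eq, Fintype.sum_prod_type]
  rfl

lemma isMetricProj_image_frobVec_iff {K : Set (Fin n1 → Fin n2 → ℝ)}
    {v p : Fin n1 → Fin n2 → ℝ} :
    IsMetricProj (frobVec '' K) (frobVec v) (frobVec p) ↔
      p ∈ K ∧ ∀ u ∈ K, frobSq (v - p) ≤ frobSq (v - u) := by
  simp only [IsMetricProj, frobVec.injective.mem_set_image, Set.forall_mem_image, dist_eq_norm,
    ← map_sub, ← norm_frobVec_sq, sq_le_sq₀ (norm_nonneg _) (norm_nonneg _)]

lemma isMetricProj_projC {K : Set (Fin n1 → Fin n2 → ℝ)} (hK : IsClosed K) (hne : K.Nonempty)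
    (v : Fin n1 → Fin n2 → ℝ) :
    IsMetricProj (frobVec '' K) (frobVec v) (frobVec (projC K v)) := by
  have hclosed : IsClosed (frobVec '' K) := frobVec.toHomeomorph.isClosedMap K hK
  obtain ⟨_, hp⟩ := IsMetricProj.exists_of_isClosed hclosed (hne.image frobVec) (frobVec v)
  obtain ⟨p, -, rfl⟩ := hp.1
  have hexists : ∃ p, p ∈ K ∧ ∀ u ∈ K, frobSq (v - p) ≤ frobSq (v - u) :=
    ⟨p, isMetricProj_image_frobVec_iff.1 hp⟩
  exact isMetricProj_image_frobVec_iff.2 (Classical.epsilon_spec hexists)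

lemma memLp_frobVec {μ : Measure (Fin n1 → Fin n2 → ℝ)} (hμ : Integrable frobSq μ) :
    MemLp frobVec 2 μ := by
  refine (memLp_two_iff_integrable_sq_norm frobVec.continuous.aestronglyMeasurable).2 ?_
  simpa only [norm_frobVec_sq] using hμ

lemma integrable_frobSq_pi {ν : Fin n1 → Fin n2 → Measure ℝ} [∀ i j, IsProbabilityMeasure (ν i j)]
    (hν : ∀ i j, MemLp id 2 (ν i j)) :
    Integrable frobSq (Measure.pi fun i => Measure.pi (ν i)) := by
  refine integrable_finsetSum _ fun i _ => integrable_finsetSum _ fun j _ => ?_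
  have hentry : MeasurePreserving (fun a : Fin n1 → Fin n2 → ℝ => a i j)
      (Measure.pi fun i => Measure.pi (ν i)) (ν i j) :=
    (measurePreserving_eval (ν i) j).comp (measurePreserving_eval (fun i => Measure.pi (ν i)) i)
  exact hentry.integrable_comp_of_integrable (hν i j).integrable_sq

end Frobenius

section Isotonic

variable {n1 n2 : ℕ}

lemma convex_setOf_isotonic : Convex ℝ {θ : Fin n1 → Fin n2 → ℝ | Isotonic θ} :=
  fun _ ha _ hb _ _ hs ht _ _ _ _ _ hik hjl =>
    add_le_add (mul_le_mul_of_nonneg_left (ha hik hjl) hs)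
      (mul_le_mul_of_nonneg_left (hb hik hjl) ht)

lemma IsLSE.isMetricProj {lse : (Fin n1 → Fin n2 → ℝ) → Fin n1 → Fin n2 → ℝ} (hlse : IsLSE lse)
    (y : Fin n1 → Fin n2 → ℝ) :
    IsMetricProj (frobVec '' {θ | Isotonic θ}) (frobVec y) (frobVec (lse y)) :=
  isMetricProj_image_frobVec_iff.2 (hlse y)

lemma sub_mem_tangentCone (θ : Fin n1 → Fin n2 → ℝ) {u : Fin n1 → Fin n2 → ℝ}
    (hu : Isotonic u) : u - θ ∈ tangentCone θ :=
  subset_closure ⟨1, one_pos, u, hu, (one_smul ℝ _).symm⟩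

lemma smul_mem_tangentCone {θ u : Fin n1 → Fin n2 → ℝ} {t : ℝ} (ht : 0 < t)
    (hu : u ∈ tangentCone θ) : t • u ∈ tangentCone θ := by
  refine map_mem_closure (continuous_const_smul t) hu ?_
  rintro _ ⟨α, hα, w, hw, rfl⟩
  exact ⟨t * α, mul_pos ht hα, w, hw, smul_smul _ _ _⟩

end Isotonic

lemma noiseMeasure_eq_pi_toNNReal (n1 n2 : ℕ) (σ : ℝ) :
    noiseMeasure n1 n2 σ =
      Measure.pi fun _ => Measure.pi fun _ => gaussianReal 0 (σ ^ 2).toNNReal := by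
  rw [Real.toNNReal_of_nonneg (sq_nonneg σ)]
  rfl

instance isProbabilityMeasure_noiseMeasure (n1 n2 : ℕ) (σ : ℝ) :
    IsProbabilityMeasure (noiseMeasure n1 n2 σ) := by
  rw [noiseMeasure_eq_pi_toNNReal]
  infer_instance

lemma integrable_frobSq_noiseMeasure (n1 n2 : ℕ) (σ : ℝ) :
    Integrable frobSq (noiseMeasure n1 n2 σ) := by
  rw [noiseMeasure_eq_pi_toNNReal]
  exact integrable_frobSq_pi fun _ _ => memLp_id_gaussianReal 2

theorem isotonic_lse_tangent_cone_risk_bound_general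
    {n1 n2 : ℕ} {μ : Measure (Fin n1 → Fin n2 → ℝ)} [IsProbabilityMeasure μ]
    (hμ : Integrable frobSq μ) (θstar : Fin n1 → Fin n2 → ℝ)
    {lse : (Fin n1 → Fin n2 → ℝ) → Fin n1 → Fin n2 → ℝ} (hlse : IsLSE lse)
    {θ : Fin n1 → Fin n2 → ℝ} (hθ : Isotonic θ) :
    ∫ ε, frobSq (lse (θstar + ε) - θstar) ∂μ ≤
      frobSq (θstar - θ) + ∫ ε, frobSq (projC (tangentCone θ) ε) ∂μ := by
  have hconvex : Convex ℝ (frobVec '' {η : Fin n1 → Fin n2 → ℝ | Isotonic η}) :=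
    convex_setOf_isotonic.linear_image frobVec.toLinearMap
  have hcone : ∀ t : ℝ, 0 < t → ∀ u ∈ frobVec '' tangentCone θ,
      t • u ∈ frobVec '' tangentCone θ := by
    rintro t ht _ ⟨u, hu, rfl⟩
    exact ⟨t • u, smul_mem_tangentCone ht hu, map_smul frobVec t u⟩
  have hsub : ∀ u ∈ frobVec '' {η | Isotonic η}, u - frobVec θ ∈ frobVec '' tangentCone θ := by
    rintro _ ⟨u, hu, rfl⟩
    exact ⟨u - θ, sub_mem_tangentCone θ hu, map_sub frobVec u θ⟩
  have hlse_proj ε : IsMetricProj (frobVec '' {η | Isotonic η}) (frobVec θstar + frobVec ε)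
      (frobVec (lse (θstar + ε))) := map_add frobVec θstar ε ▸ hlse.isMetricProj (θstar + ε)
  have hnoise_proj := isMetricProj_projC (K := tangentCone θ) isClosed_closure
    ⟨_, sub_mem_tangentCone θ hθ⟩
  simpa only [← map_sub, norm_frobVec_sq] using
    IsMetricProj.integral_norm_sub_sq_le hconvex hcone (Set.mem_image_of_mem frobVec hθ) hsub
      (memLp_frobVec hμ) hlse_proj hnoise_proj

/-- **Lemma 3 (risk bound via tangent cones).** For every isotonic `θ*`, the least
squares estimator satisfies, for every isotonic `θ`,
`R(θ*, θ̂) ≤ (‖θ* − θ‖² + E‖Π(ε, T_M(θ))‖²) / n` with `n = n1 n2`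
(equivalently, `R(θ*, θ̂)` is at most `(1/n)` times the infimum over `θ ∈ M` of the
right-hand side). -/
theorem isotonic_lse_tangent_cone_risk_bound
    {n1 n2 : ℕ} (hn1 : 1 < n1) (hn2 : 1 < n2) (σ : ℝ) (hσ : 0 < σ)
    (θstar : Fin n1 → Fin n2 → ℝ) (hθstar : Isotonic θstar)
    (lse : (Fin n1 → Fin n2 → ℝ) → Fin n1 → Fin n2 → ℝ) (hlse : IsLSE lse)
    (θ : Fin n1 → Fin n2 → ℝ) (hθ : Isotonic θ) :
    risk σ θstar lse ≤
      (frobSq (θstar - θ) +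
        ∫ ε, frobSq (projC (tangentCone θ) ε) ∂noiseMeasure n1 n2 σ) / (n1 * n2) :=
  div_le_div_of_nonneg_right (isotonic_lse_tangent_cone_risk_bound_general
    (integrable_frobSq_noiseMeasure n1 n2 σ) θstar hlse hθ) (by positivity)
end
end
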